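/- arXiv:1705.06434 — 2 statements merged into one kernel-verified Lean document; each statement's English description precedes it below -/
import Mathlib

section
/- Let λ be a Dyck word of semilength n. A natural labelling of λ is a bijection g from the chords of λ to {1,…,n} such that g(c) < g(c') whenever c' is nested in c; its inversion statistic is inv(g) := #{ordered pairs (c,c') of chords with c' strictly to the right of c and g(c') < g(c)}. Then Σ_g q^{inv(g)} · ∏_{c ∈ Chord(λ)} [l(c)] = [n]! in ℤ[q], where the sum is over all natural labellings g of λ. -/
/-!
Dyck words, chords, nesting, capacities and Lascoux–Schützenberger labellings.
A step is a `Bool`: `true` = U (up), `false` = D (down).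
-/

open scoped BigOperators Classical

noncomputable section

/-- The height (#U − #D) of the prefix of length `k`. -/
def heightAt (l : List Bool) (k : ℕ) : ℤ :=
  ((l.take k).count true : ℤ) - ((l.take k).count false : ℤ)

/-- `l` is a Dyck word: equally many U's and D's, and every prefix has at least
as many U's as D's. -/
def IsDyckWord (l : List Bool) : Prop :=
  l.count true = l.count false ∧
    ∀ k, (l.take k).count false ≤ (l.take k).count true

/-- `(i,j)` is a chord of `l` (0-indexed matched pair of a U at `i` and a D at `j`
under the standard parenthesis matching). -/
def IsChord (l : List Bool) (i j : ℕ) : Prop :=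
  i < j ∧ j < l.length ∧ l.getD i false = true ∧ l.getD j true = false ∧
    heightAt l (j + 1) = heightAt l i ∧
    ∀ k ∈ Finset.Icc (i + 1) j, heightAt l i < heightAt l k

/-- The finset of chords of `l`. -/
def chords (l : List Bool) : Finset (ℕ × ℕ) :=
  (Finset.range l.length ×ˢ Finset.range l.length).filter fun p => IsChord l p.1 p.2

/-- `c' = (i',j')` is nested in `c = (i,j)` iff `i < i' < j' < j`. -/
def NestedIn (c' c : ℕ × ℕ) : Prop :=
  c.1 < c'.1 ∧ c'.1 < c'.2 ∧ c'.2 < c.2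

/-- The length `l(c)` of a chord: one plus the number of chords nested in it. -/
def chordLen (l : List Bool) (c : ℕ × ℕ) : ℕ :=
  1 + ((chords l).filter fun c' => NestedIn c' c).card

/-- The capacity of a chord: the number of D's strictly before its opening position. -/
def cap (l : List Bool) (c : ℕ × ℕ) : ℕ := (l.take c.1).count false

/-- LS-labellings of `l`: functions on chords (encoded as functions on `ℕ × ℕ`
vanishing off the chords) which weakly increase under nesting and are bounded by
the capacity on leaf chords. -/
def LSLabellings (l : List Bool) : Set ((ℕ × ℕ) → ℕ) :=
  {f | (∀ c, c ∉ chords l → f c = 0) ∧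
       (∀ c ∈ chords l, ∀ c' ∈ chords l, NestedIn c' c → f c ≤ f c') ∧
       (∀ c ∈ chords l, (∀ c' ∈ chords l, ¬ NestedIn c' c) → f c ≤ cap l c)}

/-- The quantum integer [n] = 1 + q + ⋯ + q^{n-1} in ℤ[q]. -/
def qintP (n : ℕ) : Polynomial ℤ := ∑ i ∈ Finset.range n, Polynomial.X ^ i

/-- The quantum factorial [n]! = [1][2]⋯[n] in ℤ[q]. -/
def qfactP (n : ℕ) : Polynomial ℤ := ∏ i ∈ Finset.range n, qintP (i + 1)

/-- The LS generating polynomial P_λ = Σ_f q^{Σ_c f(c)} ∈ ℤ[q], summed over all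
LS-labellings f of λ. -/
def PLS (l : List Bool) : Polynomial ℤ :=
  ∑ᶠ f ∈ LSLabellings l, Polynomial.X ^ (∑ c ∈ chords l, f c)

/-- Natural labellings of λ: bijections from the chords onto {1,…,n} (encoded as
functions on `ℕ × ℕ` vanishing off the chords) that strictly increase under nesting. -/
def NaturalLabellings (l : List Bool) (n : ℕ) : Set ((ℕ × ℕ) → ℕ) :=
  {g | (∀ c, c ∉ chords l → g c = 0) ∧
       Set.BijOn g (chords l : Set (ℕ × ℕ)) (Set.Icc 1 n) ∧
       (∀ c ∈ chords l, ∀ c' ∈ chords l, NestedIn c' c → g c < g c')}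

/-- The inversion statistic of a natural labelling: the number of ordered pairs
(c, c') of chords with c' strictly to the right of c and g(c') < g(c). -/
def invStat (l : List Bool) (g : (ℕ × ℕ) → ℕ) : ℕ :=
  (((chords l) ×ˢ (chords l)).filter fun p => p.1.2 < p.2.1 ∧ g p.2 < g p.1).card

/-!
In a natural labelling the least label sits on an outermost chord `c`, where it forms an inversion
with exactly the chords to the left of `c`. Discarding `c` leaves a natural labelling of the other
chords, whose lengths do not change since `c` is nested in none of them. Hence, with `F` the
inversion polynomial, `F(S) = ∑ q ^ left(c) * F(S \ c)` over the outermost chords `c`, and the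
product formula follows by induction from `∑ q ^ left(c) * [l(c)] = [n]`.
-/

section ArcFamilies

open Finset

variable {S : Finset (ℕ × ℕ)} {c x : ℕ × ℕ}

/-- A noncrossing arc family: arcs `(i, j)` with `i < j`, any two of which are nested or separated.
The chords of a word form such a family, and unlike them these families are closed under removing
arcs. -/
structure IsNoncrossing (S : Finset (ℕ × ℕ)) : Prop where
  lt : ∀ c ∈ S, c.1 < c.2
  pairwise : (S : Set (ℕ × ℕ)).Pairwise fun c c' =>
    NestedIn c c' ∨ NestedIn c' c ∨ c.2 < c'.1 ∨ c'.2 < c.1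

/-- The arcs of `S` strictly to the left of `c`. -/
def leftArcs (S : Finset (ℕ × ℕ)) (c : ℕ × ℕ) : Finset (ℕ × ℕ) := {x ∈ S | x.2 < c.1}

/-- The length of an arc relative to the family `S`; it is `chordLen l` when `S = chords l`. -/
def arcLen (S : Finset (ℕ × ℕ)) (c : ℕ × ℕ) : ℕ := 1 + #{x ∈ S | NestedIn x c}

/-- The outermost arcs of `S`, that is, the roots of its nesting forest. -/
def outerArcs (S : Finset (ℕ × ℕ)) : Finset (ℕ × ℕ) := {c ∈ S | ∀ x ∈ S, ¬ NestedIn c x}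

/-- `c` is the arc of the noncrossing family `S` that closes last: every other arc is nested in `c`
or lies to its left. -/
def IsLastArc (S : Finset (ℕ × ℕ)) (c : ℕ × ℕ) : Prop :=
  c ∈ S ∧ ∀ x ∈ S, x ≠ c → NestedIn x c ∨ x.2 < c.1

lemma IsNoncrossing.mono {T : Finset (ℕ × ℕ)} (hS : IsNoncrossing S) (hTS : T ⊆ S) :
    IsNoncrossing T :=
  ⟨fun c hc => hS.lt c (hTS hc), hS.pairwise.mono (coe_subset.mpr hTS)⟩

lemma leftArcs_subset (S : Finset (ℕ × ℕ)) (c : ℕ × ℕ) : leftArcs S c ⊆ S := filter_subset _ _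

lemma outerArcs_subset (S : Finset (ℕ × ℕ)) : outerArcs S ⊆ S := filter_subset _ _

lemma leftArcs_leftArcs (hxc : x.1 ≤ c.1) : leftArcs (leftArcs S c) x = leftArcs S x := by
  ext y
  simp only [leftArcs, mem_filter]
  grind

lemma arcLen_leftArcs (hxc : x.2 ≤ c.1) : arcLen (leftArcs S c) x = arcLen S x := by
  unfold arcLen
  congr 2
  ext y
  simp only [leftArcs, mem_filter]
  grind [NestedIn]

lemma arcLen_erase (hc : c ∈ outerArcs S) (hx : x ∈ S) : arcLen (S.erase c) x = arcLen S x := by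
  have hcx : ¬ NestedIn c x := (mem_filter.mp hc).2 x hx
  unfold arcLen
  congr 2
  ext y
  simp only [mem_filter, mem_erase]
  grind

lemma prod_qintP_arcLen_eq_mul_erase (hc : c ∈ outerArcs S) :
    ∏ x ∈ S, qintP (arcLen S x) =
      qintP (arcLen S c) * ∏ x ∈ S.erase c, qintP (arcLen (S.erase c) x) := by
  rw [← mul_prod_erase S _ (outerArcs_subset S hc)]
  congr 1
  exact prod_congr rfl fun x hx => by rw [arcLen_erase hc (mem_of_mem_erase hx)]

lemma IsNoncrossing.exists_isLastArc (hS : IsNoncrossing S) (hne : S.Nonempty) :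
    ∃ c, IsLastArc S c := by
  obtain ⟨c, hc, hmax⟩ := S.exists_max_image Prod.snd hne
  refine ⟨c, hc, fun x hx hxc => ?_⟩
  have hle := hmax x hx
  have hlt := hS.lt x hx
  rcases hS.pairwise hx hc hxc with h | h | h | h
  · exact .inl h
  · exact absurd h.2.2 hle.not_gt
  · exact .inr h
  · omega

lemma IsLastArc.card_leftArcs_add_arcLen (hc : IsLastArc S c) (hlt : c.1 < c.2) :
    #(leftArcs S c) + arcLen S c = #S := by
  have hinside : {x ∈ S | ¬ x.2 < c.1} = insert c {x ∈ S | NestedIn x c} := by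
    ext x
    obtain ⟨hcS, hlast⟩ := hc
    simp only [mem_filter, mem_insert, NestedIn] at *
    grind
  have hcard : #{x ∈ S | ¬ x.2 < c.1} = arcLen S c := by
    rw [hinside, card_insert_of_notMem (fun h => (mem_filter.mp h).2.1.false), arcLen, add_comm]
  rw [leftArcs, ← hcard, card_filter_add_card_filter_not]

lemma IsLastArc.outerArcs_eq_insert (hc : IsLastArc S c) (hS : IsNoncrossing S) :
    outerArcs S = insert c (outerArcs (leftArcs S c)) := by
  ext x
  obtain ⟨hcS, hlast⟩ := hc
  have hclt := hS.lt c hcS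
  simp only [outerArcs, leftArcs, mem_insert, mem_filter, NestedIn] at *
  grind

lemma qintP_add (m k : ℕ) : qintP (m + k) = qintP m + Polynomial.X ^ m * qintP k := by
  simp only [qintP, sum_range_add, mul_sum, pow_add]

-- The outermost arcs cut `[0, #S)` into intervals, that of `c` having `arcLen S c` elements and
-- starting at `#(leftArcs S c)`; the last arc contributes the top interval.
lemma IsNoncrossing.sum_outerArcs_eq_qintP_card (hS : IsNoncrossing S) :
    ∑ c ∈ outerArcs S, (Polynomial.X : Polynomial ℤ) ^ #(leftArcs S c) * qintP (arcLen S c) =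
      qintP #S := by
  induction S using Finset.strongInduction with
  | H S ih =>
    rcases S.eq_empty_or_nonempty with rfl | hne
    · simp [outerArcs, qintP]
    obtain ⟨c, hc⟩ := hS.exists_isLastArc hne
    have hclt := hS.lt c hc.1
    have hc_notMem : c ∉ leftArcs S c := by simp [leftArcs, hclt.le]
    have hlt_left : ∀ x ∈ outerArcs (leftArcs S c), x.1 < x.2 ∧ x.2 < c.1 := fun x hx =>
      have hx' := mem_filter.mp (outerArcs_subset _ hx)
      ⟨hS.lt x hx'.1, hx'.2⟩
    have ih_left := ih (leftArcs S c)
      ((leftArcs_subset S c).ssubset_of_mem_notMem hc.1 hc_notMem) (hS.mono (leftArcs_subset S c))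
    rw [hc.outerArcs_eq_insert hS, sum_insert fun h => hc_notMem (outerArcs_subset _ h),
      ← hc.card_leftArcs_add_arcLen hclt, qintP_add, ← ih_left, add_comm]
    congr 1
    refine sum_congr rfl fun x hx => ?_
    obtain ⟨hx₁, hx₂⟩ := hlt_left x hx
    rw [leftArcs_leftArcs (hx₁.trans hx₂).le, arcLen_leftArcs hx₂.le]

end ArcFamilies

section Chords

open Finset

variable {l : List Bool} {i j i' j' k : ℕ}

lemma getD_false_eq_true_iff : l.getD i false = true ↔ l[i]? = some true := by
  rw [List.getD_eq_getElem?_getD]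
  cases l[i]? <;> simp

lemma getD_true_eq_false_iff : l.getD i true = false ↔ l[i]? = some false := by
  rw [List.getD_eq_getElem?_getD]
  cases l[i]? <;> simp

lemma count_eq_card_filter_getElem? {α : Type*} [DecidableEq α] (a : α) (l : List α) :
    l.count a = #{i ∈ range l.length | l[i]? = some a} := by
  induction l with
  | nil => simp
  | cons b l ih =>
    rw [List.count_cons, ih, card_filter, card_filter, List.length_cons, sum_range_succ']
    simp

lemma heightAt_succ_of_up (h : l[k]? = some true) : heightAt l (k + 1) = heightAt l k + 1 := by
  grind [heightAt, List.take_add_one]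

lemma heightAt_succ_of_down (h : l[k]? = some false) : heightAt l (k + 1) = heightAt l k - 1 := by
  grind [heightAt, List.take_add_one]

lemma heightAt_of_length_le (h : l.length ≤ k) : heightAt l k = heightAt l l.length := by
  rw [heightAt, heightAt, List.take_of_length_le h, List.take_length]

lemma IsDyckWord.heightAt_nonneg (hd : IsDyckWord l) (k : ℕ) : 0 ≤ heightAt l k :=
  sub_nonneg.mpr (Nat.cast_le.mpr (hd.2 k))

lemma IsDyckWord.heightAt_length (hd : IsDyckWord l) : heightAt l l.length = 0 := by
  rw [heightAt, List.take_length, hd.1, sub_self]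

lemma mem_chords {c : ℕ × ℕ} : c ∈ chords l ↔ IsChord l c.1 c.2 := by
  simp only [chords, mem_filter, mem_product, mem_range, and_iff_right_iff_imp]
  exact fun h => ⟨h.1.trans h.2.1, h.2.1⟩

lemma IsChord.le_of_same_start (h : IsChord l i j) (h' : IsChord l i j') : j ≤ j' := by
  obtain ⟨-, -, -, -, -, habove⟩ := h
  obtain ⟨hij', -, -, -, hreturn', -⟩ := h'
  by_contra! hlt
  have := habove (j' + 1) (mem_Icc.mpr (by omega))
  omega

lemma IsChord.end_unique (h : IsChord l i j) (h' : IsChord l i j') : j = j' :=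
  le_antisymm (h.le_of_same_start h') (h'.le_of_same_start h)

lemma IsChord.nested_or_separated (h : IsChord l i j) (h' : IsChord l i' j') (hlt : i < i') :
    j' < j ∨ j < i' := by
  obtain ⟨-, -, -, -, hreturn, habove⟩ := h
  obtain ⟨-, -, -, -, hreturn', habove'⟩ := h'
  by_contra! hcross
  have hi' := habove i' (mem_Icc.mpr (by omega))
  rcases hcross.1.eq_or_lt with rfl | hjj'
  · omega
  · have := habove' (j + 1) (mem_Icc.mpr (by omega))
    omega

lemma isNoncrossing_chords (l : List Bool) : IsNoncrossing (chords l) := by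
  refine ⟨fun c hc => (mem_chords.mp hc).1, ?_⟩
  rintro ⟨i, j⟩ hc ⟨i', j'⟩ hc' hne
  have h : IsChord l i j := mem_chords.mp hc
  have h' : IsChord l i' j' := mem_chords.mp hc'
  have hij := h.1
  have hij' := h'.1
  simp only [NestedIn]
  rcases lt_trichotomy i i' with hlt | rfl | hlt
  · have := h.nested_or_separated h' hlt
    omega
  · exact absurd (by rw [h.end_unique h']) hne
  · have := h'.nested_or_separated h hlt
    omega

-- The chord closes at the first return to the height of its opening step.
lemma IsDyckWord.exists_isChord (hd : IsDyckWord l) (hup : l[i]? = some true) :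
    ∃ j, IsChord l i j := by
  have hi : i < l.length := (List.getElem?_eq_some_iff.mp hup).1
  have hreturns : ∃ j, i < j ∧ heightAt l (j + 1) ≤ heightAt l i := by
    refine ⟨l.length, hi, ?_⟩
    rw [heightAt_of_length_le (Nat.le_succ _), hd.heightAt_length]
    exact hd.heightAt_nonneg i
  obtain ⟨hij, hle⟩ := Nat.find_spec hreturns
  have hmin := fun k => Nat.find_min hreturns (m := k)
  set j := Nat.find hreturns
  have habove : ∀ k ∈ Icc (i + 1) j, heightAt l i < heightAt l k := by
    intro k hk
    obtain ⟨hik, hkj⟩ := mem_Icc.mp hk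
    rcases hik.eq_or_lt with rfl | hik
    · rw [heightAt_succ_of_up hup]
      exact lt_add_one _
    · obtain ⟨k, rfl⟩ : ∃ k', k = k' + 1 := ⟨k - 1, by omega⟩
      have := hmin k (by omega)
      grind
  have hj := habove j (mem_Icc.mpr (by omega))
  have hjl : j < l.length := by
    by_contra! hge
    rw [heightAt_of_length_le (hge.trans j.le_succ), ← heightAt_of_length_le hge] at hle
    omega
  have hdown : l[j]? = some false := by
    rw [List.getElem?_eq_getElem hjl, Option.some_inj]
    by_contra hne
    have := heightAt_succ_of_up (l := l) (k := j) (by simpa [hjl] using hne)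
    omega
  have hreturn := heightAt_succ_of_down hdown
  exact ⟨j, hij, hjl, getD_false_eq_true_iff.mpr hup, getD_true_eq_false_iff.mpr hdown, by omega,
    habove⟩

lemma IsDyckWord.card_chords (hd : IsDyckWord l) : #(chords l) = l.count true := by
  rw [count_eq_card_filter_getElem?]
  refine card_bij (fun c _ => c.1) (fun c hc => ?_) ?_ fun i hi => ?_
  · obtain ⟨hlt, hlen, hup, -⟩ := mem_chords.mp hc
    exact mem_filter.mpr ⟨mem_range.mpr (hlt.trans hlen), getD_false_eq_true_iff.mp hup⟩
  · rintro ⟨i, j⟩ hc ⟨i', j'⟩ hc' (rfl : i = i')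
    have h : IsChord l i j := mem_chords.mp hc
    rw [h.end_unique (mem_chords.mp hc')]
  · obtain ⟨j, hj⟩ := hd.exists_isChord (mem_filter.mp hi).2
    exact ⟨(i, j), mem_chords.mpr hj, rfl⟩

lemma IsDyckWord.two_mul_count_true (hd : IsDyckWord l) : 2 * l.count true = l.length := by
  rw [← List.count_true_add_count_false, ← hd.1, two_mul]

end Chords

section Labellings

open Finset

variable {S : Finset (ℕ × ℕ)} {A : Finset ℕ} {c : ℕ × ℕ} {g : ℕ × ℕ → ℕ} {m : ℕ}

/-- The natural labellings of an arc family `S` by the label set `A`, extended by zero off `S`. An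
arbitrary label set lets one discard an arc together with its label without renumbering the
others. -/
def arcLabellings (S : Finset (ℕ × ℕ)) (A : Finset ℕ) : Set (ℕ × ℕ → ℕ) :=
  {g | (∀ c, c ∉ S → g c = 0) ∧ Set.BijOn g S A ∧ ∀ c ∈ S, ∀ c' ∈ S, NestedIn c' c → g c < g c'}

/-- The inversions of a labelling: pairs of arcs, the second to the right of the first and carrying
the smaller label. -/
def inversions (S : Finset (ℕ × ℕ)) (g : ℕ × ℕ → ℕ) : Finset ((ℕ × ℕ) × (ℕ × ℕ)) :=
  {p ∈ S ×ˢ S | p.1.2 < p.2.1 ∧ g p.2 < g p.1}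

lemma arcLabellings_chords (l : List Bool) (n : ℕ) :
    arcLabellings (chords l) (Icc 1 n) = NaturalLabellings l n := by
  rw [arcLabellings, NaturalLabellings, coe_Icc]

lemma finite_arcLabellings (S : Finset (ℕ × ℕ)) (A : Finset ℕ) : (arcLabellings S A).Finite := by
  refine Set.Finite.of_injOn (f := fun g (c : S) => g c) (t := {h | ∀ c, h c ∈ A})
    (fun g hg c => hg.2.1.mapsTo c.2) (fun g hg g' hg' h => ?_)
    (Set.Finite.pi' fun _ => A.finite_toSet)
  funext c
  by_cases hc : c ∈ S
  · exact congrFun h ⟨c, hc⟩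
  · rw [hg.1 c hc, hg'.1 c hc]

lemma arcLabellings_empty : arcLabellings ∅ ∅ = {0} := by
  ext g
  simp [arcLabellings, funext_iff]

lemma lt_of_mem_arcLabellings_erase {T : Finset (ℕ × ℕ)} {x : ℕ × ℕ}
    (hm : IsLeast (A : Set ℕ) m) (hg : g ∈ arcLabellings T (A.erase m)) (hx : x ∈ T) : m < g x :=
  have hgx := mem_erase.mp (hg.2.1.mapsTo hx)
  lt_of_le_of_ne (hm.2 hgx.2) hgx.1.symm

lemma update_mem_arcLabellings (hc : c ∈ outerArcs S) (hm : IsLeast (A : Set ℕ) m)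
    (hg : g ∈ arcLabellings (S.erase c) (A.erase m)) :
    Function.update g c m ∈ arcLabellings S A := by
  obtain ⟨hcS, hcouter⟩ := mem_filter.mp hc
  have hlt := fun x (hx : x ∈ S.erase c) => lt_of_mem_arcLabellings_erase hm hg hx
  obtain ⟨hzero, hbij, hmono⟩ := hg
  have heq : Set.EqOn g (Function.update g c m) ↑(S.erase c) := fun x hx =>
    (Function.update_of_ne (ne_of_mem_erase hx) ..).symm
  refine ⟨fun x hx => ?_, ?_, fun x hx y hy hyx => ?_⟩
  · rw [Function.update_of_ne (by grind), hzero x (by grind)]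
  · have hinsert := (hbij.congr heq).insert (a := c) (by simp)
    rwa [Function.update_self, ← coe_insert, ← coe_insert, insert_erase hcS,
      insert_erase hm.1] at hinsert
  · grind [Function.update_apply]

lemma update_zero_mem_arcLabellings (hc : c ∈ S) (hg : g ∈ arcLabellings S A) :
    Function.update g c 0 ∈ arcLabellings (S.erase c) (A.erase (g c)) := by
  obtain ⟨hzero, hbij, hmono⟩ := hg
  have heq : Set.EqOn g (Function.update g c 0) ↑(S.erase c) := fun x hx =>
    (Function.update_of_ne (ne_of_mem_erase hx) ..).symm
  refine ⟨by grind [Function.update_apply], ?_, by grind [Function.update_apply]⟩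
  rw [coe_erase] at heq ⊢
  rw [coe_erase]
  exact (hbij.sdiff_singleton hc).congr heq

lemma bijOn_update_arcLabellings (hc : c ∈ outerArcs S) (hm : IsLeast (A : Set ℕ) m) :
    Set.BijOn (fun g => Function.update g c m) (arcLabellings (S.erase c) (A.erase m))
      {g ∈ arcLabellings S A | g c = m} := by
  refine ⟨fun g hg => ⟨update_mem_arcLabellings hc hm hg, Function.update_self ..⟩,
    fun g hg g' hg' h => ?_, ?_⟩
  · funext x
    by_cases hxc : x = c
    · rw [hg.1 x (by simp [hxc]), hg'.1 x (by simp [hxc])]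
    · simpa [hxc] using congrFun h x
  · rintro g ⟨hg, rfl⟩
    exact ⟨_, update_zero_mem_arcLabellings (outerArcs_subset S hc) hg, by simp⟩

lemma arcLabellings_eq_biUnion_outerArcs (hm : IsLeast (A : Set ℕ) m) :
    arcLabellings S A = ⋃ c ∈ (outerArcs S : Set (ℕ × ℕ)), {g ∈ arcLabellings S A | g c = m} := by
  refine subset_antisymm (fun g hg => ?_) (Set.iUnion₂_subset fun c _ => Set.sep_subset _ _)
  obtain ⟨c, hcS, hgc⟩ := hg.2.1.surjOn hm.1
  have hcouter : ∀ x ∈ S, ¬ NestedIn c x := fun x hx hcx =>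
    (hgc ▸ hg.2.2 x hx c hcS hcx).not_ge (hm.2 (hg.2.1.mapsTo hx))
  exact Set.mem_biUnion (mem_filter.mpr ⟨hcS, hcouter⟩) ⟨hg, hgc⟩

lemma inversions_update (hcS : c ∈ S) (hclt : c.1 < c.2) (hlt : ∀ x ∈ S.erase c, m < g x) :
    inversions S (Function.update g c m) =
      (leftArcs S c ×ˢ {c}) ∪ inversions (S.erase c) g := by
  ext ⟨x, y⟩
  simp only [inversions, leftArcs, mem_union, mem_filter, mem_product, mem_singleton, mem_erase]
  grind [Function.update_apply]

lemma card_inversions_update (hcS : c ∈ S) (hclt : c.1 < c.2) (hlt : ∀ x ∈ S.erase c, m < g x) :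
    #(inversions S (Function.update g c m)) = #(leftArcs S c) + #(inversions (S.erase c) g) := by
  have hdisj : Disjoint (leftArcs S c ×ˢ {c}) (inversions (S.erase c) g) := by
    rw [disjoint_left]
    rintro ⟨x, y⟩ hleft hinv
    simp only [inversions, mem_filter, mem_product, mem_singleton, mem_erase] at hleft hinv
    exact hinv.1.2.1 hleft.2
  rw [inversions_update hcS hclt hlt, card_union_of_disjoint hdisj, card_product, card_singleton,
    mul_one]

/-- The inversion generating polynomial of the natural labellings of `S` by `A`. -/
def inversionPoly (S : Finset (ℕ × ℕ)) (A : Finset ℕ) : Polynomial ℤ :=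
  ∑ᶠ g ∈ arcLabellings S A, Polynomial.X ^ #(inversions S g)

lemma finsum_arcLabellings_of_outerArc (hS : IsNoncrossing S) (hc : c ∈ outerArcs S)
    (hm : IsLeast (A : Set ℕ) m) :
    ∑ᶠ g ∈ {g ∈ arcLabellings S A | g c = m}, (Polynomial.X : Polynomial ℤ) ^ #(inversions S g) =
      Polynomial.X ^ #(leftArcs S c) * inversionPoly (S.erase c) (A.erase m) := by
  have hcS := outerArcs_subset S hc
  rw [inversionPoly, mul_finsum_mem' _ _ (finite_arcLabellings _ _)]
  refine (finsum_mem_eq_of_bijOn _ (bijOn_update_arcLabellings hc hm) fun g hg => ?_).symm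
  rw [card_inversions_update hcS (hS.lt c hcS) fun x => lt_of_mem_arcLabellings_erase hm hg,
    pow_add]

lemma inversionPoly_eq_sum_outerArcs (hS : IsNoncrossing S) (hm : IsLeast (A : Set ℕ) m) :
    inversionPoly S A = ∑ c ∈ outerArcs S,
      Polynomial.X ^ #(leftArcs S c) * inversionPoly (S.erase c) (A.erase m) := by
  have hdisj : (outerArcs S : Set (ℕ × ℕ)).PairwiseDisjoint
      fun c => {g ∈ arcLabellings S A | g c = m} := fun c hc c' hc' hne =>
    Set.disjoint_left.mpr fun g hg hg' => hne <|
      hg.1.2.1.injOn (outerArcs_subset S hc) (outerArcs_subset S hc') (hg.2.trans hg'.2.symm)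
  rw [inversionPoly, arcLabellings_eq_biUnion_outerArcs hm,
    finsum_mem_biUnion hdisj (finite_toSet _)
      fun c _ => (finite_arcLabellings S A).subset (Set.sep_subset _ _),
    finsum_mem_coe_finset]
  exact sum_congr rfl fun c hc => finsum_arcLabellings_of_outerArc hS hc hm

theorem stmt_12_general (hS : IsNoncrossing S) (hA : #A = #S) :
    inversionPoly S A * ∏ c ∈ S, qintP (arcLen S c) = qfactP #S := by
  induction hn : #S generalizing S A with
  | zero =>
    obtain rfl := card_eq_zero.mp hn
    obtain rfl := card_eq_zero.mp (hA.trans hn)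
    simp [inversionPoly, arcLabellings_empty, inversions, qfactP]
  | succ n ih =>
    have hAne : A.Nonempty := card_pos.mp (by omega)
    have hm := A.isLeast_min' hAne
    have hterm : ∀ c ∈ outerArcs S,
        Polynomial.X ^ #(leftArcs S c) * inversionPoly (S.erase c) (A.erase (A.min' hAne)) *
          ∏ x ∈ S, qintP (arcLen S x) =
        qfactP n * (Polynomial.X ^ #(leftArcs S c) * qintP (arcLen S c)) := by
      intro c hc
      have hcS := outerArcs_subset S hc
      have hSc : #(S.erase c) = n := by rw [card_erase_of_mem hcS, hn, Nat.add_sub_cancel]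
      have hAc : #(A.erase (A.min' hAne)) = #(S.erase c) := by
        rw [card_erase_of_mem hm.1, card_erase_of_mem hcS, hA]
      rw [prod_qintP_arcLen_eq_mul_erase hc, ← ih (hS.mono (erase_subset c S)) hAc hSc]
      ring
    rw [inversionPoly_eq_sum_outerArcs hS hm, sum_mul, sum_congr rfl hterm, ← mul_sum,
      hS.sum_outerArcs_eq_qintP_card, hn, qfactP, qfactP, prod_range_succ]

end Labellings

/-- Paper's Lemma `LSDyck`: Σ_g q^{inv(g)} · ∏_c [l(c)] = [n]!. -/
theorem stmt_12 (n : ℕ) (l : List Bool) (hd : IsDyckWord l) (hlen : l.length = 2 * n) :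
    (∑ᶠ g ∈ NaturalLabellings l n, (Polynomial.X : Polynomial ℤ) ^ invStat l g) *
        (∏ c ∈ chords l, qintP (chordLen l c)) = qfactP n := by
  obtain rfl : (chords l).card = n := by linarith [hd.card_chords, hd.two_mul_count_true]
  rw [← arcLabellings_chords]
  exact stmt_12_general (isNoncrossing_chords l) (Nat.card_Icc 1 _)
end
end

section
/- Let M ≥ 1, N ≥ 1 and c ≥ 0 be integers. Then in ℚ(q) one has ∏_{i=M+1}^{M+N−1} (1+q^i) · ( (1+q^{M+N}) · [M+N+c; M, N, c] − q^{2M+N} · [N+M−1 choose M] · [N+M+c choose c] ) = [N+M choose N]_{q²} · ([N+2M]/[2(N+M)]) · ∏_{i=1}^{N} (1+q^i) · [M+N+c choose c]. -/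
open scoped BigOperators

noncomputable section

/-- The field ℚ(q). -/
abbrev K : Type := RatFunc ℚ

/-- The variable q. -/
def qq : K := RatFunc.X

/-- The quantum integer [n] = 1 + q + ⋯ + q^{n-1}. -/
def qint (n : ℕ) : K := ∑ i ∈ Finset.range n, qq ^ i

/-- The quantum factorial [n]! = [1][2]⋯[n]. -/
def qfact (n : ℕ) : K := ∏ i ∈ Finset.range n, qint (i + 1)

/-- The Gaussian binomial coefficient [n choose k] = [n]!/([k]!·[n-k]!),
with the convention that it is 0 when k > n. -/
def qbinom (n k : ℕ) : K :=
  if k ≤ n then qfact n / (qfact k * qfact (n - k)) else 0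

/-- The q-multinomial coefficient [k₁+⋯+k_r; k₁,…,k_r] = [k₁+⋯+k_r]!/([k₁]!⋯[k_r]!). -/
def qmultinom (ks : List ℕ) : K := qfact ks.sum / (ks.map qfact).prod

/-- The q-double factorial [2m]!! = [2][4]⋯[2m]. -/
def qdfact (m : ℕ) : K := ∏ i ∈ Finset.range m, qint (2 * (i + 1))

/-- The q²-binomial coefficient [n choose k]_{q²} = [2n]!!/([2(n-k)]!!·[2k]!!). -/
def qbinom2 (n k : ℕ) : K :=
  if k ≤ n then qdfact n / (qdfact (n - k) * qdfact k) else 0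

/-!
The factor `[M+N+c choose c]` splits off both sides. Absorption `[M+N] [M+N-1 choose M] =
[N] [M+N choose M]` together with `[2(M+N)] = [2M+N] + q^(2M+N) [N]` evaluates the remaining bracket
as `[N+2M] / [M+N] * [M+N choose M]`. On the right, `[2n]!! = ∏_{i ≤ n} (1 + q^i) * [n]!` turns the
`q²`-binomial into a Gaussian binomial, and the surplus factor `1 + q^(M+N)` is absorbed by
`[2(M+N)] = (1 + q^(M+N)) [M+N]`.
-/

theorem qint_add (a b : ℕ) : qint (a + b) = qint a + qq ^ a * qint b := by
  simp only [qint, Finset.sum_range_add, Finset.mul_sum, pow_add]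

theorem qint_two_mul (n : ℕ) : qint (2 * n) = (1 + qq ^ n) * qint n := by
  rw [two_mul, qint_add]
  ring

theorem qint_ne_zero {n : ℕ} (hn : n ≠ 0) : qint n ≠ 0 := by
  have qint_eq_algebraMap : qint n =
      algebraMap (Polynomial ℚ) K (∑ i ∈ Finset.range n, Polynomial.X ^ i) := by
    simp only [qint, qq, map_sum, map_pow, RatFunc.algebraMap_X]
  rw [qint_eq_algebraMap]
  exact RatFunc.algebraMap_ne_zero (Polynomial.monic_geom_sum_X hn).ne_zero

theorem one_add_qq_pow_ne_zero {n : ℕ} (hn : n ≠ 0) : 1 + qq ^ n ≠ 0 :=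
  left_ne_zero_of_mul (qint_two_mul n ▸ qint_ne_zero (mul_ne_zero two_ne_zero hn))

theorem prod_Icc_one_add_qq_pow_ne_zero (n : ℕ) : ∏ i ∈ Finset.Icc 1 n, (1 + qq ^ i) ≠ 0 :=
  Finset.prod_ne_zero_iff.mpr fun _ hi =>
    one_add_qq_pow_ne_zero (Nat.one_le_iff_ne_zero.mp (Finset.mem_Icc.mp hi).1)

theorem prod_Icc_one_mul_prod_Icc {R : Type*} [CommMonoid R] (f : ℕ → R) (m n : ℕ) :
    (∏ i ∈ Finset.Icc 1 m, f i) * ∏ i ∈ Finset.Icc (m + 1) (m + n), f i =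
      ∏ i ∈ Finset.Icc 1 (m + n), f i := by
  simpa only [← Finset.Icc_add_one_left_eq_Ioc, zero_add] using
    Finset.prod_Ioc_consecutive f m.zero_le (m.le_add_right n)

theorem qfact_succ (n : ℕ) : qfact (n + 1) = qfact n * qint (n + 1) :=
  Finset.prod_range_succ _ n

theorem qfact_ne_zero (n : ℕ) : qfact n ≠ 0 :=
  Finset.prod_ne_zero_iff.mpr fun i _ => qint_ne_zero i.succ_ne_zero

theorem qdfact_eq_prod_mul_qfact (n : ℕ) :
    qdfact n = (∏ i ∈ Finset.Icc 1 n, (1 + qq ^ i)) * qfact n := by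
  rw [← Finset.Ico_add_one_right_eq_Icc, Finset.prod_Ico_eq_prod_range, Nat.add_sub_cancel]
  simp only [qdfact, qfact, qint_two_mul, Finset.prod_mul_distrib, add_comm 1]

theorem qbinom_add_left (a b : ℕ) : qbinom (a + b) a = qfact (a + b) / (qfact a * qfact b) := by
  rw [qbinom, if_pos (a.le_add_right b), Nat.add_sub_cancel_left]

theorem qbinom_add_right (a b : ℕ) : qbinom (a + b) b = qfact (a + b) / (qfact a * qfact b) := by
  rw [add_comm a b, qbinom_add_left, mul_comm (qfact b)]

theorem qint_succ_mul_qbinom_eq (m n : ℕ) :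
    qint (m + n + 1) * qbinom (m + n) m = qint (n + 1) * qbinom (m + n + 1) m := by
  have hm := qfact_ne_zero m
  have hn := qfact_ne_zero n
  have hqint := qint_ne_zero n.succ_ne_zero
  rw [add_assoc m n 1, qbinom_add_left, qbinom_add_left, ← add_assoc, qfact_succ, qfact_succ]
  field_simp

theorem qmultinom_eq_qbinom_mul_qbinom (a b c : ℕ) :
    qmultinom [a, b, c] = qbinom (a + b) a * qbinom (a + b + c) c := by
  have hab := qfact_ne_zero (a + b)
  rw [qbinom_add_left, qbinom_add_right]
  simp only [qmultinom, List.sum_cons, List.sum_nil, List.map_cons, List.map_nil, List.prod_cons,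
    List.prod_nil, add_zero, mul_one, ← add_assoc]
  field_simp

theorem qbinom2_mul_prod_Icc (m n : ℕ) :
    qbinom2 (m + n) n * ∏ i ∈ Finset.Icc 1 n, (1 + qq ^ i) =
      qbinom (m + n) m * ∏ i ∈ Finset.Icc (m + 1) (m + n), (1 + qq ^ i) := by
  have hm := prod_Icc_one_add_qq_pow_ne_zero m
  have hn := prod_Icc_one_add_qq_pow_ne_zero n
  rw [qbinom2, if_pos (n.le_add_left m), Nat.add_sub_cancel, qbinom_add_left]
  simp only [qdfact_eq_prod_mul_qfact, ← prod_Icc_one_mul_prod_Icc _ m n]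
  field_simp

theorem qint_add_two_mul (m n : ℕ) :
    qint (n + 2 * m) = (1 + qq ^ (m + n)) * qint (m + n) - qq ^ (2 * m + n) * qint n := by
  rw [← qint_two_mul, show 2 * (m + n) = 2 * m + n + n by ring, qint_add (2 * m + n),
    add_sub_cancel_right, add_comm n]

theorem one_add_qq_pow_mul_qbinom_sub (m n : ℕ) :
    (1 + qq ^ (m + n + 1)) * qbinom (m + n + 1) m - qq ^ (2 * m + (n + 1)) * qbinom (m + n) m =
      qint (n + 1 + 2 * m) / qint (m + n + 1) * qbinom (m + n + 1) m := by
  have hqint := qint_ne_zero (m + n).succ_ne_zero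
  rw [qint_add_two_mul, ← add_assoc m n 1, div_mul_eq_mul_div, eq_div_iff hqint]
  linear_combination -qq ^ (2 * m + (n + 1)) * qint_succ_mul_qbinom_eq m n

theorem prod_Icc_div_qint_two_mul (m n : ℕ) :
    (∏ i ∈ Finset.Icc (m + 1) (m + n + 1), (1 + qq ^ i)) / qint (2 * (m + n + 1)) =
      (∏ i ∈ Finset.Icc (m + 1) (m + n), (1 + qq ^ i)) / qint (m + n + 1) := by
  have hpow := one_add_qq_pow_ne_zero (m + n).succ_ne_zero
  rw [Finset.prod_Icc_succ_top (by omega), qint_two_mul, mul_comm (1 + _),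
    mul_div_mul_right _ _ hpow]

theorem stmt_14 (M N c : ℕ) (hM : 1 ≤ M) (hN : 1 ≤ N) :
    (∏ i ∈ Finset.Icc (M + 1) (M + N - 1), (1 + qq ^ i)) *
        ((1 + qq ^ (M + N)) * qmultinom [M, N, c]
          - qq ^ (2 * M + N) * qbinom (N + M - 1) M * qbinom (N + M + c) c)
      = qbinom2 (N + M) N * (qint (N + 2 * M) / qint (2 * (N + M))) *
          (∏ i ∈ Finset.Icc 1 N, (1 + qq ^ i)) * qbinom (M + N + c) c := by
  obtain ⟨n, rfl⟩ := Nat.exists_eq_add_of_le' hN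
  rw [add_comm (n + 1) M, ← add_assoc M n 1, Nat.add_sub_cancel]
  calc
    _ = (∏ i ∈ Finset.Icc (M + 1) (M + n), (1 + qq ^ i)) *
          ((1 + qq ^ (M + n + 1)) * qbinom (M + n + 1) M
            - qq ^ (2 * M + (n + 1)) * qbinom (M + n) M) * qbinom (M + n + 1 + c) c := by
      rw [qmultinom_eq_qbinom_mul_qbinom, ← add_assoc M n 1]
      ring
    _ = qbinom (M + n + 1) M * qint (n + 1 + 2 * M) *
          ((∏ i ∈ Finset.Icc (M + 1) (M + n), (1 + qq ^ i)) / qint (M + n + 1)) *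
          qbinom (M + n + 1 + c) c := by
      rw [one_add_qq_pow_mul_qbinom_sub]
      ring
    _ = (qbinom (M + n + 1) M * ∏ i ∈ Finset.Icc (M + 1) (M + n + 1), (1 + qq ^ i)) *
          (qint (n + 1 + 2 * M) / qint (2 * (M + n + 1))) * qbinom (M + n + 1 + c) c := by
      rw [← prod_Icc_div_qint_two_mul]
      ring
    _ = _ := by
      rw [add_assoc M n 1, ← qbinom2_mul_prod_Icc]
      ring
end
end
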